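/- Let R be a commutative ring, 𝔗 a torsion theory over R, x₁,…,x_n a finite sequence of elements of R, and M an R-module. Then x₁,…,x_n is a weak M-regular sequence with respect to 𝔗 if and only if 𝔗-Kgrade_R((x₁,…,x_i)R, M) ≥ i for all i = 1,…,n. -/

import Mathlib

open CategoryTheory

universe u

noncomputable section

/-- A torsion theory over `R`: a class of `R`-modules closed under isomorphism, submodules,
quotient modules, extensions, and directed colimits (formulated as closure under directed
unions of submodules). -/
structure IsTorsionTheory (R : Type u) [CommRing R] (T : Set (ModuleCat.{u} R)) : Prop where
  mem_of_iso : ∀ {N N' : ModuleCat.{u} R}, (N ≅ N') → N ∈ T → N' ∈ T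
  submodule_mem : ∀ {N : ModuleCat.{u} R}, N ∈ T → ∀ S : Submodule R N,
    ModuleCat.of R S ∈ T
  quotient_mem : ∀ {N : ModuleCat.{u} R}, N ∈ T → ∀ S : Submodule R N,
    ModuleCat.of R (N ⧸ S) ∈ T
  ext_mem : ∀ {N : ModuleCat.{u} R} (S : Submodule R N),
    ModuleCat.of R S ∈ T → ModuleCat.of R (N ⧸ S) ∈ T → N ∈ T
  directed_mem : ∀ {N : ModuleCat.{u} R} {ι : Type u} [Nonempty ι] (S : ι → Submodule R N),
    Directed (· ≤ ·) S → (∀ i, ModuleCat.of R (S i) ∈ T) → iSup S = ⊤ → N ∈ T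

variable {R : Type u} [CommRing R]

/-- The "outgoing" differential of the Koszul cocomplex `Hom_R(K_•(x), M)`, whose degree `i`
component is indexed by the `i`-element subsets of `{1, …, r}`. -/
def koszulDiff {r : ℕ} (x : Fin r → R) (M : Type u) [AddCommGroup M] [Module R M] (i : ℕ) :
    ({s : Finset (Fin r) // s.card = i} → M) →ₗ[R]
      ({s : Finset (Fin r) // s.card = i + 1} → M) where
  toFun φ t := ∑ j ∈ t.1.attach,
    ((-1 : R) ^ (t.1.filter (fun k => k < j.1)).card * x j.1) •
      φ ⟨t.1.erase j.1, by simp [Finset.card_erase_of_mem j.2, t.2]⟩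
  map_add' φ ψ := by
    funext t
    simp [Finset.sum_add_distrib, smul_add]
  map_smul' c φ := by
    funext t
    simp [Finset.smul_sum, smul_comm c]

/-- The "incoming" differential of the Koszul cocomplex in degree `i`
(its source is trivial when `i = 0`). -/
def koszulDiffIn {r : ℕ} (x : Fin r → R) (M : Type u) [AddCommGroup M] [Module R M] (i : ℕ) :
    ({s : Finset (Fin r) // s.card + 1 = i} → M) →ₗ[R]
      ({s : Finset (Fin r) // s.card = i} → M) where
  toFun φ t := ∑ j ∈ t.1.attach,
    ((-1 : R) ^ (t.1.filter (fun k => k < j.1)).card * x j.1) •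
      φ ⟨t.1.erase j.1, by rw [Finset.card_erase_add_one j.2]; exact t.2⟩
  map_add' φ ψ := by
    funext t
    simp [Finset.sum_add_distrib, smul_add]
  map_smul' c φ := by
    funext t
    simp [Finset.smul_sum, smul_comm c]

/-- The `i`-th Koszul cohomology `H^i(x; M)` of `M` with respect to `x₁, …, x_r`, i.e. the
`i`-th cohomology of the cocomplex `Hom_R(K_•(x), M)`. -/
abbrev koszulCohomology {r : ℕ} (x : Fin r → R) (M : Type u) [AddCommGroup M] [Module R M]
    (i : ℕ) : Type u :=
  ↥(LinearMap.ker (koszulDiff x M i)) ⧸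
    (Submodule.comap (LinearMap.ker (koszulDiff x M i)).subtype
      (LinearMap.range (koszulDiffIn x M i)))

/-- The `𝔗`-Koszul grade of the ideal `(x₁, …, x_r)` on `M`: the infimum of the set of `i`
such that `H^i(x; M) ∉ 𝔗` (with `inf ∅ = +∞`). -/
def TKgrade (T : Set (ModuleCat.{u} R)) {r : ℕ} (x : Fin r → R) (M : Type u)
    [AddCommGroup M] [Module R M] : ℕ∞ :=
  sInf ((↑· : ℕ → ℕ∞) '' {i | ModuleCat.of R (koszulCohomology x M i) ∉ T})

/-- `x₁, …, x_n` is a weak `M`-regular sequence with respect to `𝔗` if the module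
`((x₁,…,x_{i-1})M :_M x_i) / (x₁,…,x_{i-1})M` belongs to `𝔗` for all `i = 1, …, n`. -/
def IsWeakRegularSeqWrt (T : Set (ModuleCat.{u} R)) {n : ℕ} (x : Fin n → R) (M : Type u)
    [AddCommGroup M] [Module R M] : Prop :=
  ∀ i : Fin n,
    ModuleCat.of R
      ↥(Submodule.map (Ideal.span (x '' {j | j < i}) • (⊤ : Submodule R M)).mkQ
        (Submodule.comap (LinearMap.lsmul R M (x i))
          (Ideal.span (x '' {j | j < i}) • (⊤ : Submodule R M)))) ∈ T

/-!
Write `y = (x₁, …, x_r)` and `x = (x₁, …, x_{r+1})`. Splitting the cochains of `x` according to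
whether a subset contains `r + 1` yields the long exact sequence
`H^{i-1}(y; M) → H^i(x; M) → H^i(y; M) → H^i(y; M)` whose last map is multiplication by
`± x_{r+1}`. If `H^j(y; M) ∈ 𝔗` for all `j < r`, it follows that `H^j(x; M) ∈ 𝔗` for all `j < r`
and that `H^r(x; M) ∈ 𝔗` if and only if the kernel of `x_{r+1}` on `H^r(y; M) ≅ M / yM` is in `𝔗`.
That kernel is the module `(yM :_M x_{r+1}) / yM`, so the theorem follows by induction on `n`.
-/

section TorsionClass

variable (P : ObjectProperty (ModuleCat.{u} R)) {X Y : Type u}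
  [AddCommGroup X] [Module R X] [AddCommGroup Y] [Module R Y]

theorem moduleCat_prop_of_injective [P.IsClosedUnderSubobjects] (f : X →ₗ[R] Y)
    (hf : Function.Injective f) (hY : P (ModuleCat.of R Y)) : P (ModuleCat.of R X) :=
  have : Mono (ModuleCat.ofHom f) := (ModuleCat.mono_iff_injective _).2 hf
  P.prop_of_mono (ModuleCat.ofHom f) hY

theorem moduleCat_prop_of_surjective [P.IsClosedUnderQuotients] (f : X →ₗ[R] Y)
    (hf : Function.Surjective f) (hX : P (ModuleCat.of R X)) : P (ModuleCat.of R Y) :=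
  have : Epi (ModuleCat.ofHom f) := (ModuleCat.epi_iff_surjective _).2 hf
  P.prop_of_epi (ModuleCat.ofHom f) hX

theorem moduleCat_prop_of_ker_of_range [P.IsClosedUnderExtensions] (f : X →ₗ[R] Y)
    (hker : P (ModuleCat.of R (LinearMap.ker f)))
    (hrange : P (ModuleCat.of R (LinearMap.range f))) : P (ModuleCat.of R X) := by
  rw [← LinearMap.ker_rangeRestrict] at hker
  exact P.prop_X₂_of_shortExact
    (LinearMap.shortExact_shortComplexKer f.surjective_rangeRestrict) hker hrange

theorem moduleCat_prop_congr [P.IsClosedUnderIsomorphisms] (e : X ≃ₗ[R] Y) :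
    P (ModuleCat.of R X) ↔ P (ModuleCat.of R Y) :=
  P.prop_iff_of_iso e.toModuleIso

end TorsionClass

namespace IsTorsionTheory

variable {T : Set (ModuleCat.{u} R)}

theorem isClosedUnderSubobjects (hT : IsTorsionTheory R T) :
    ObjectProperty.IsClosedUnderSubobjects (· ∈ T) where
  prop_of_mono f _ hY := hT.mem_of_iso
    (LinearEquiv.ofInjective f.hom ((ModuleCat.mono_iff_injective f).1 ‹_›)).symm.toModuleIso
    (hT.submodule_mem hY (LinearMap.range f.hom))

theorem isClosedUnderQuotients (hT : IsTorsionTheory R T) :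
    ObjectProperty.IsClosedUnderQuotients (· ∈ T) where
  prop_of_epi f _ hX := hT.mem_of_iso
    (f.hom.quotKerEquivOfSurjective ((ModuleCat.epi_iff_surjective f).1 ‹_›)).toModuleIso
    (hT.quotient_mem hX (LinearMap.ker f.hom))

theorem isClosedUnderExtensions (hT : IsTorsionTheory R T) :
    ObjectProperty.IsClosedUnderExtensions (· ∈ T) where
  prop_X₂_of_shortExact {S} hS h₁ h₃ := by
    have := hT.isClosedUnderSubobjects
    have hf := (ModuleCat.mono_iff_injective S.f).1 hS.mono_f
    have hg := (ModuleCat.epi_iff_surjective S.g).1 hS.epi_g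
    have hker : LinearMap.ker S.g.hom = LinearMap.range S.f.hom :=
      LinearMap.exact_iff.1
        ((ShortComplex.ShortExact.moduleCat_exact_iff_function_exact S).1 hS.exact)
    refine hT.ext_mem (LinearMap.ker S.g.hom) ?_ ?_
    · rw [hker]
      exact (moduleCat_prop_congr (· ∈ T) (LinearEquiv.ofInjective S.f.hom hf)).1 h₁
    · exact (moduleCat_prop_congr (· ∈ T) (S.g.hom.quotKerEquivOfSurjective hg)).2 h₃

end IsTorsionTheory

section FinsetFinSucc

variable {r : ℕ}

/-- The subset of `{1, …, r + 1}` obtained by adding `r + 1` to a subset of `{1, …, r}`; as `Fin r`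
is `0`-based, the new element is `Fin.last r`. -/
def consLast (s : Finset (Fin r)) : Finset (Fin (r + 1)) :=
  (s.map Fin.castSuccEmb).cons (Fin.last r) (by simp [Fin.castSucc_ne_last])

theorem card_consLast (s : Finset (Fin r)) : (consLast s).card = s.card + 1 := by
  simp [consLast]

theorem last_mem_consLast (s : Finset (Fin r)) : Fin.last r ∈ consLast s :=
  Finset.mem_cons_self _ _

theorem castSucc_mem_consLast {s : Finset (Fin r)} {j : Fin r} :
    j.castSucc ∈ consLast s ↔ j ∈ s := by
  simp [consLast, Fin.castSucc_ne_last]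

theorem consLast_injective : Function.Injective (consLast (r := r)) := fun s t h => by
  ext j
  rw [← castSucc_mem_consLast, h, castSucc_mem_consLast]

theorem consLast_erase_last (s : Finset (Fin r)) :
    (consLast s).erase (Fin.last r) = s.map Fin.castSuccEmb :=
  Finset.erase_cons _

theorem consLast_erase_castSucc (s : Finset (Fin r)) (j : Fin r) :
    (consLast s).erase j.castSucc = consLast (s.erase j) := by
  ext k
  induction k using Fin.lastCases <;>
    simp [consLast, Fin.castSucc_ne_last, (Fin.castSucc_ne_last _).symm]

theorem filter_lt_last_consLast (s : Finset (Fin r)) :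
    (consLast s).filter (fun k => k < Fin.last r) = s.map Fin.castSuccEmb := by
  ext k
  induction k using Fin.lastCases <;>
    simp [castSucc_mem_consLast, Fin.castSucc_lt_last, Fin.castSucc_ne_last]

theorem filter_lt_castSucc_consLast (s : Finset (Fin r)) (j : Fin r) :
    (consLast s).filter (fun k => k < j.castSucc) =
      (s.filter (fun k => k < j)).map Fin.castSuccEmb := by
  ext k
  induction k using Fin.lastCases <;>
    simp [castSucc_mem_consLast, Fin.castSucc_ne_last, Fin.le_last]

theorem eq_map_castSucc_or_eq_consLast (s : Finset (Fin (r + 1))) :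
    ∃ t : Finset (Fin r), s = t.map Fin.castSuccEmb ∨ s = consLast t := by
  refine ⟨Finset.univ.filter fun j => j.castSucc ∈ s, ?_⟩
  by_cases h : Fin.last r ∈ s
  · right
    ext k
    induction k using Fin.lastCases <;> simp [h, last_mem_consLast, castSucc_mem_consLast]
  · left
    ext k
    induction k using Fin.lastCases <;> simp [h, Fin.castSucc_ne_last]

end FinsetFinSucc

section TotalDifferential

variable {r : ℕ} {M : Type u} [AddCommGroup M] [Module R M]

/-- The Koszul differential on functions on all subsets of `{1, …, r}`, regardless of their
cardinality; it lets one compute in the Koszul cocomplex without proofs about cardinalities. -/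
def koszulTotalDiff (x : Fin r → R) (Φ : Finset (Fin r) → M) (t : Finset (Fin r)) : M :=
  ∑ j ∈ t, ((-1 : R) ^ (t.filter (fun k => k < j)).card * x j) • Φ (t.erase j)

theorem koszulDiff_comp_val (x : Fin r → R) (i : ℕ) (Φ : Finset (Fin r) → M)
    (t : {s : Finset (Fin r) // s.card = i + 1}) :
    koszulDiff x M i (Φ ∘ Subtype.val) t = koszulTotalDiff x Φ t :=
  Finset.sum_attach t.1 fun j =>
    ((-1 : R) ^ (t.1.filter (fun k => k < j)).card * x j) • Φ (t.1.erase j)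

theorem koszulDiffIn_comp_val (x : Fin r → R) (i : ℕ) (Φ : Finset (Fin r) → M)
    (t : {s : Finset (Fin r) // s.card = i}) :
    koszulDiffIn x M i (Φ ∘ Subtype.val) t = koszulTotalDiff x Φ t :=
  Finset.sum_attach t.1 fun j =>
    ((-1 : R) ^ (t.1.filter (fun k => k < j)).card * x j) • Φ (t.1.erase j)

variable (x : Fin (r + 1) → R) (Φ : Finset (Fin (r + 1)) → M) (s : Finset (Fin r))

theorem koszulTotalDiff_map_castSucc :
    koszulTotalDiff x Φ (s.map Fin.castSuccEmb) =
      koszulTotalDiff (x ∘ Fin.castSucc) (fun t => Φ (t.map Fin.castSuccEmb)) s := by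
  simp [koszulTotalDiff, Finset.filter_map, Finset.map_erase, Function.comp_def]

theorem koszulTotalDiff_consLast :
    koszulTotalDiff x Φ (consLast s) =
      koszulTotalDiff (x ∘ Fin.castSucc) (Φ ∘ consLast) s +
        ((-1 : R) ^ s.card * x (Fin.last r)) • Φ (s.map Fin.castSuccEmb) := by
  rw [koszulTotalDiff, consLast, Finset.sum_cons, Finset.sum_map, ← consLast,
    filter_lt_last_consLast, consLast_erase_last, Finset.card_map, add_comm]
  refine congrArg (· + _) (Finset.sum_congr rfl fun j _ => ?_)
  rw [Fin.coe_castSuccEmb, filter_lt_castSucc_consLast, Finset.card_map, consLast_erase_castSucc]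
  rfl

end TotalDifferential

theorem neg_one_pow_smul_smul_self {M : Type*} [AddCommGroup M] [Module R M] (i : ℕ) (m : M) :
    (-1 : R) ^ i • (-1 : R) ^ i • m = m := by
  rw [smul_smul, ← mul_pow, neg_one_mul, neg_neg, one_pow, one_smul]

section Colon

variable {M N : Type*} [AddCommGroup M] [Module R M] [AddCommGroup N] [Module R N] (a : R)

theorem map_mkQ_comap_lsmul (S : Submodule R M) :
    (S.comap (LinearMap.lsmul R M a)).map S.mkQ =
      LinearMap.ker (LinearMap.lsmul R (M ⧸ S) a) := by
  have : S.comap (LinearMap.lsmul R M a) =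
      (LinearMap.ker (LinearMap.lsmul R (M ⧸ S) a)).comap S.mkQ := by
    ext m
    exact (Submodule.Quotient.mk_eq_zero S).symm
  rw [this, Submodule.map_comap_eq_of_surjective S.mkQ_surjective]

/-- A linear equivalence restricts to the kernels of the multiplications by `a`. -/
def kerLsmulCongr (e : M ≃ₗ[R] N) :
    LinearMap.ker (LinearMap.lsmul R M a) ≃ₗ[R] LinearMap.ker (LinearMap.lsmul R N a) :=
  e.ofSubmodules _ _ <| by
    ext n
    simp [← map_smul]

end Colon

section Split

variable {r : ℕ}

/-- Subsets of `{1, …, r + 1}` with `i` elements are either subsets of `{1, …, r}` with `i` elements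
or obtained by adding `r + 1` to a subset of `{1, …, r}` with `i - 1` elements. -/
def finsetFinSuccEquiv (r i : ℕ) :
    {s : Finset (Fin r) // s.card = i} ⊕ {s : Finset (Fin r) // s.card + 1 = i} ≃
      {s : Finset (Fin (r + 1)) // s.card = i} :=
  Equiv.ofBijective
    (Sum.elim (fun s => ⟨s.1.map Fin.castSuccEmb, (Finset.card_map _).trans s.2⟩)
      fun s => ⟨consLast s.1, (card_consLast s.1).trans s.2⟩) <| by
    constructor
    · refine Function.Injective.sumElim (fun s t h => ?_) (fun s t h => ?_) fun s t h => ?_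
      · exact Subtype.ext (Finset.map_injective _ (congrArg Subtype.val h))
      · exact Subtype.ext (consLast_injective (congrArg Subtype.val h))
      · have heq : s.1.map Fin.castSuccEmb = consLast t.1 := congrArg Subtype.val h
        have hlast : Fin.last r ∈ s.1.map Fin.castSuccEmb := heq ▸ last_mem_consLast t.1
        simp [Fin.castSucc_ne_last] at hlast
    · rintro ⟨s, hs⟩
      obtain ⟨t, rfl | rfl⟩ := eq_map_castSucc_or_eq_consLast s
      · exact ⟨.inl ⟨t, by rwa [Finset.card_map] at hs⟩, rfl⟩
      · exact ⟨.inr ⟨t, by rwa [card_consLast] at hs⟩, rfl⟩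

variable (R) (M : Type u) [AddCommGroup M] [Module R M]

/-- The degree `i` component of the Koszul cocomplex of `x₁, …, x_{r+1}` as the direct sum of the
components of degrees `i` and `i - 1` of the Koszul cocomplex of `x₁, …, x_r`. -/
def koszulSplit (r i : ℕ) :
    ({s : Finset (Fin (r + 1)) // s.card = i} → M) ≃ₗ[R]
      ({s : Finset (Fin r) // s.card = i} → M) × ({s : Finset (Fin r) // s.card + 1 = i} → M) :=
  LinearEquiv.funCongrLeft R M (finsetFinSuccEquiv r i) ≪≫ₗ
    LinearEquiv.sumArrowLequivProdArrow _ _ R M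

/-- The identification of the degree `k` component of the Koszul cocomplex with the source of
`koszulDiffIn` in degree `k + 1`. -/
def koszulShift (r k : ℕ) :
    ({s : Finset (Fin r) // s.card = k} → M) ≃ₗ[R]
      ({s : Finset (Fin r) // s.card + 1 = k + 1} → M) :=
  LinearEquiv.funCongrLeft R M (Equiv.subtypeEquivRight fun _ => Nat.add_right_cancel_iff)

/-- The embedding of the Koszul cochains of `x₁, …, x_r` of degree `k` into those of
`x₁, …, x_{r+1}` of degree `k + 1`, as cochains supported on the subsets containing `r + 1`. -/
def koszulExtend (r k : ℕ) :
    ({s : Finset (Fin r) // s.card = k} → M) →ₗ[R]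
      ({s : Finset (Fin (r + 1)) // s.card = k + 1} → M) :=
  (koszulSplit R M r (k + 1)).symm.toLinearMap ∘ₗ LinearMap.inr R _ _ ∘ₗ
    (koszulShift R M r k).toLinearMap

variable {R M}

theorem koszulSplit_koszulExtend (k : ℕ) (ψ : {s : Finset (Fin r) // s.card = k} → M) :
    koszulSplit R M r (k + 1) (koszulExtend R M r k ψ) = (0, koszulShift R M r k ψ) :=
  LinearEquiv.apply_symm_apply _ _

theorem koszulDiffIn_koszulShift (x : Fin r → R) (k : ℕ)
    (φ : {s : Finset (Fin r) // s.card = k} → M) :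
    koszulDiffIn x M (k + 1) (koszulShift R M r k φ) = koszulDiff x M k φ :=
  rfl

instance isEmptyFinsetCardAddOneEqZero : IsEmpty {s : Finset (Fin r) // s.card + 1 = 0} :=
  ⟨fun s => Nat.succ_ne_zero _ s.2⟩

theorem koszulDiffIn_zero (x : Fin r → R) : koszulDiffIn x M 0 = 0 :=
  Subsingleton.elim _ _

theorem range_koszulDiffIn_succ (x : Fin r → R) (k : ℕ) :
    LinearMap.range (koszulDiffIn x M (k + 1)) = LinearMap.range (koszulDiff x M k) :=
  ((koszulShift R M r k).range_comp (koszulDiffIn x M (k + 1))).symm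

variable (x : Fin (r + 1) → R) (i : ℕ) (φ : {s : Finset (Fin (r + 1)) // s.card = i} → M)

theorem koszulSplit_koszulDiff :
    koszulSplit R M r (i + 1) (koszulDiff x M i φ) =
      (koszulDiff (x ∘ Fin.castSucc) M i (koszulSplit R M r i φ).1,
        koszulShift R M r i (koszulDiffIn (x ∘ Fin.castSucc) M i (koszulSplit R M r i φ).2 +
          ((-1 : R) ^ i * x (Fin.last r)) • (koszulSplit R M r i φ).1)) := by
  obtain ⟨Φ, rfl⟩ := Subtype.val_injective.surjective_comp_right φ
  refine Prod.ext (funext fun s => ?_) (funext fun s => ?_)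
  · exact (koszulDiff_comp_val x i Φ _).trans ((koszulTotalDiff_map_castSucc x Φ s).trans
      (koszulDiff_comp_val _ i _ s).symm)
  · obtain ⟨s, hs⟩ := s
    obtain rfl : s.card = i := Nat.succ.inj hs
    refine (koszulDiff_comp_val x _ Φ _).trans ((koszulTotalDiff_consLast x Φ s).trans ?_)
    exact congrArg (· + _)
      (koszulDiffIn_comp_val (x ∘ Fin.castSucc) s.card (Φ ∘ consLast) ⟨s, rfl⟩).symm

theorem koszulDiff_eq_zero_iff :
    koszulDiff x M i φ = 0 ↔
      koszulDiff (x ∘ Fin.castSucc) M i (koszulSplit R M r i φ).1 = 0 ∧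
        koszulDiffIn (x ∘ Fin.castSucc) M i (koszulSplit R M r i φ).2 +
          ((-1 : R) ^ i * x (Fin.last r)) • (koszulSplit R M r i φ).1 = 0 := by
  rw [← (koszulSplit R M r (i + 1)).map_eq_zero_iff, koszulSplit_koszulDiff, Prod.mk_eq_zero,
    LinearEquiv.map_eq_zero_iff]

end Split

theorem koszulCohomology_mk_eq_zero_iff {r : ℕ} {x : Fin r → R} {M : Type u} [AddCommGroup M]
    [Module R M] {i : ℕ} {φ : {s : Finset (Fin r) // s.card = i} → M}
    (hφ : φ ∈ LinearMap.ker (koszulDiff x M i)) :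
    (Submodule.Quotient.mk ⟨φ, hφ⟩ : koszulCohomology x M i) = 0 ↔
      φ ∈ LinearMap.range (koszulDiffIn x M i) :=
  Submodule.Quotient.mk_eq_zero _

section ExactSequence

variable {r : ℕ} (x : Fin (r + 1) → R) (M : Type u) [AddCommGroup M] [Module R M]

theorem koszulSplit_fst_mem_range_koszulDiffIn {i : ℕ}
    {φ : {s : Finset (Fin (r + 1)) // s.card = i} → M}
    (hφ : φ ∈ LinearMap.range (koszulDiffIn x M i)) :
    (koszulSplit R M r i φ).1 ∈ LinearMap.range (koszulDiffIn (x ∘ Fin.castSucc) M i) := by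
  cases i with
  | zero =>
    rw [koszulDiffIn_zero, LinearMap.range_zero, Submodule.mem_bot] at hφ
    rw [hφ, map_zero]
    exact zero_mem _
  | succ k =>
    rw [range_koszulDiffIn_succ] at hφ ⊢
    obtain ⟨ψ, rfl⟩ := hφ
    rw [koszulSplit_koszulDiff]
    exact ⟨_, rfl⟩

/-- The map `H^i(x₁, …, x_{r+1}; M) → H^i(x₁, …, x_r; M)` induced by restricting cochains to the
subsets of `{1, …, r}`. -/
def koszulCohomologyRestrict (i : ℕ) :
    koszulCohomology x M i →ₗ[R] koszulCohomology (x ∘ Fin.castSucc) M i :=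
  Submodule.mapQ _ _
    ((LinearMap.fst R _ _ ∘ₗ (koszulSplit R M r i).toLinearMap).restrict
      fun φ hφ => ((koszulDiff_eq_zero_iff x i φ).1 hφ).1)
    fun _ hφ => koszulSplit_fst_mem_range_koszulDiffIn x M hφ

theorem koszulDiff_koszulExtend (k : ℕ) (ψ : {s : Finset (Fin r) // s.card = k} → M) :
    koszulDiff x M (k + 1) (koszulExtend R M r k ψ) =
      koszulExtend R M r (k + 1) (koszulDiff (x ∘ Fin.castSucc) M k ψ) := by
  apply (koszulSplit R M r (k + 1 + 1)).injective
  rw [koszulSplit_koszulDiff, koszulSplit_koszulExtend, koszulSplit_koszulExtend, map_zero,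
    koszulDiffIn_koszulShift, smul_zero, add_zero]

theorem koszulExtend_mem_range_koszulDiffIn {k : ℕ}
    {ψ : {s : Finset (Fin r) // s.card = k} → M}
    (hψ : ψ ∈ LinearMap.range (koszulDiffIn (x ∘ Fin.castSucc) M k)) :
    koszulExtend R M r k ψ ∈ LinearMap.range (koszulDiffIn x M (k + 1)) := by
  rw [range_koszulDiffIn_succ]
  cases k with
  | zero =>
    rw [koszulDiffIn_zero, LinearMap.range_zero, Submodule.mem_bot] at hψ
    rw [hψ, map_zero]
    exact zero_mem _
  | succ k =>
    rw [range_koszulDiffIn_succ] at hψ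
    obtain ⟨χ, rfl⟩ := hψ
    exact ⟨_, koszulDiff_koszulExtend x M k χ⟩

/-- The map `H^k(x₁, …, x_r; M) → H^{k+1}(x₁, …, x_{r+1}; M)` of the long exact sequence,
induced by extending cochains by zero to the subsets not containing `r + 1`. -/
def koszulCohomologyExtend (k : ℕ) :
    koszulCohomology (x ∘ Fin.castSucc) M k →ₗ[R] koszulCohomology x M (k + 1) :=
  Submodule.mapQ _ _
    ((koszulExtend R M r k).restrict fun ψ (hψ : koszulDiff _ M k ψ = 0) =>
      show koszulDiff x M (k + 1) _ = 0 by rw [koszulDiff_koszulExtend, hψ, map_zero])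
    fun _ hψ => koszulExtend_mem_range_koszulDiffIn x M hψ

theorem range_koszulCohomologyRestrict (i : ℕ) :
    LinearMap.range (koszulCohomologyRestrict x M i) =
      LinearMap.ker
        (LinearMap.lsmul R (koszulCohomology (x ∘ Fin.castSucc) M i) (x (Fin.last r))) := by
  ext q
  constructor
  · rintro ⟨p, rfl⟩
    obtain ⟨⟨φ, hφ⟩, rfl⟩ := Submodule.Quotient.mk_surjective _ p
    have hcocycle := ((koszulDiff_eq_zero_iff x i φ).1 hφ).2
    refine (Submodule.Quotient.mk_eq_zero _).2 ⟨-((-1 : R) ^ i • (koszulSplit R M r i φ).2), ?_⟩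
    rw [map_neg, map_smul, eq_neg_of_add_eq_zero_left hcocycle, smul_neg, neg_neg, mul_smul,
      neg_one_pow_smul_smul_self]
    rfl
  · intro hq
    obtain ⟨⟨a, ha⟩, rfl⟩ := Submodule.Quotient.mk_surjective _ q
    obtain ⟨c, hc⟩ := (koszulCohomology_mk_eq_zero_iff (Submodule.smul_mem _ _ ha)).1 hq
    refine ⟨Submodule.Quotient.mk ⟨(koszulSplit R M r i).symm (a, -((-1 : R) ^ i • c)), ?_⟩, ?_⟩
    · rw [LinearMap.mem_ker, koszulDiff_eq_zero_iff, LinearEquiv.apply_symm_apply, map_neg,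
        map_smul, hc, mul_smul, neg_add_cancel]
      exact ⟨ha, rfl⟩
    · refine congrArg Submodule.Quotient.mk (Subtype.ext ?_)
      exact congrArg Prod.fst (LinearEquiv.apply_symm_apply (koszulSplit R M r i) _)

variable {M} in
theorem koszulCohomologyRestrict_mk_eq_zero_iff {i : ℕ}
    {φ : {s : Finset (Fin (r + 1)) // s.card = i} → M}
    (hφ : φ ∈ LinearMap.ker (koszulDiff x M i)) :
    koszulCohomologyRestrict x M i (Submodule.Quotient.mk ⟨φ, hφ⟩) = 0 ↔
      (koszulSplit R M r i φ).1 ∈ LinearMap.range (koszulDiffIn (x ∘ Fin.castSucc) M i) :=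
  Submodule.Quotient.mk_eq_zero _

theorem koszulCohomologyRestrict_zero_injective :
    Function.Injective (koszulCohomologyRestrict x M 0) := by
  rw [← LinearMap.ker_eq_bot, LinearMap.ker_eq_bot']
  intro q hq
  obtain ⟨⟨φ, hφ⟩, rfl⟩ := Submodule.Quotient.mk_surjective _ q
  rw [koszulCohomologyRestrict_mk_eq_zero_iff, koszulDiffIn_zero, LinearMap.range_zero,
    Submodule.mem_bot] at hq
  have hzero : φ = 0 :=
    (koszulSplit R M r 0).map_eq_zero_iff.1 (Prod.ext hq (Subsingleton.elim _ _))
  exact (koszulCohomology_mk_eq_zero_iff hφ).2 (hzero ▸ zero_mem _)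

variable {M} in
theorem exists_eq_koszulExtend_add_koszulDiff {k : ℕ}
    {φ : {s : Finset (Fin (r + 1)) // s.card = k + 1} → M} (hφ : koszulDiff x M (k + 1) φ = 0)
    (hfst : (koszulSplit R M r (k + 1) φ).1 ∈
      LinearMap.range (koszulDiff (x ∘ Fin.castSucc) M k)) :
    ∃ ψ θ, koszulDiff (x ∘ Fin.castSucc) M k ψ = 0 ∧
      φ = koszulExtend R M r k ψ + koszulDiff x M k θ := by
  obtain ⟨c, hc⟩ := hfst
  obtain ⟨b, hb⟩ := (koszulShift R M r k).surjective (koszulSplit R M r (k + 1) φ).2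
  refine ⟨b - ((-1 : R) ^ k * x (Fin.last r)) • c, (koszulSplit R M r k).symm (c, 0), ?_, ?_⟩
  · have hcocycle := ((koszulDiff_eq_zero_iff x (k + 1) φ).1 hφ).2
    rw [← hb, koszulDiffIn_koszulShift] at hcocycle
    rw [map_sub, map_smul, hc, ← hcocycle, pow_succ]
    module
  · apply (koszulSplit R M r (k + 1)).injective
    rw [map_add, koszulSplit_koszulExtend, koszulSplit_koszulDiff, LinearEquiv.apply_symm_apply,
      map_zero, zero_add, Prod.mk_add_mk, ← map_add, sub_add_cancel, zero_add, hb, hc]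

theorem ker_koszulCohomologyRestrict_succ (k : ℕ) :
    LinearMap.ker (koszulCohomologyRestrict x M (k + 1)) =
      LinearMap.range (koszulCohomologyExtend x M k) := by
  ext q
  constructor
  · intro hq
    obtain ⟨⟨φ, hφ⟩, rfl⟩ := Submodule.Quotient.mk_surjective _ q
    rw [LinearMap.mem_ker, koszulCohomologyRestrict_mk_eq_zero_iff, range_koszulDiffIn_succ] at hq
    obtain ⟨ψ, θ, hψ, rfl⟩ := exists_eq_koszulExtend_add_koszulDiff x hφ hq
    refine ⟨Submodule.Quotient.mk ⟨ψ, hψ⟩, (Submodule.Quotient.eq' _).2 ?_⟩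
    rw [Submodule.mem_comap, range_koszulDiffIn_succ]
    exact ⟨θ, (neg_add_cancel_left _ _).symm⟩
  · rintro ⟨p, rfl⟩
    obtain ⟨⟨ψ, hψ⟩, rfl⟩ := Submodule.Quotient.mk_surjective _ p
    refine (koszulCohomologyRestrict_mk_eq_zero_iff x _).2 ?_
    rw [LinearMap.domRestrict_apply, koszulSplit_koszulExtend]
    exact zero_mem _

theorem moduleCat_prop_koszulCohomology_iff_ker_lsmul (P : ObjectProperty (ModuleCat.{u} R))
    [P.IsClosedUnderSubobjects] [P.IsClosedUnderQuotients] [P.IsClosedUnderExtensions] {i : ℕ}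
    (hP : ∀ k, k + 1 = i → P (ModuleCat.of R (koszulCohomology (x ∘ Fin.castSucc) M k))) :
    P (ModuleCat.of R (koszulCohomology x M i)) ↔
      P (ModuleCat.of R (LinearMap.ker
        (LinearMap.lsmul R (koszulCohomology (x ∘ Fin.castSucc) M i) (x (Fin.last r))))) := by
  rw [← range_koszulCohomologyRestrict]
  refine ⟨moduleCat_prop_of_surjective P _ (LinearMap.surjective_rangeRestrict _), fun hrange => ?_⟩
  cases i with
  | zero =>
    exact (moduleCat_prop_congr P
      (LinearEquiv.ofInjective _ (koszulCohomologyRestrict_zero_injective x M))).2 hrange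
  | succ k =>
    refine moduleCat_prop_of_ker_of_range P (koszulCohomologyRestrict x M (k + 1)) ?_ hrange
    rw [ker_koszulCohomologyRestrict_succ]
    exact moduleCat_prop_of_surjective P _ (LinearMap.surjective_rangeRestrict _) (hP k rfl)

end ExactSequence

section TopCohomology

variable {r : ℕ} (x : Fin r → R) (M : Type u) [AddCommGroup M] [Module R M]

theorem ker_koszulDiff_self : LinearMap.ker (koszulDiff x M r) = ⊤ := by
  have : IsEmpty {s : Finset (Fin r) // s.card = r + 1} :=
    ⟨fun s => Nat.not_succ_le_self r (s.2.symm.trans_le (card_finset_fin_le s.1))⟩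
  exact LinearMap.ker_eq_top.2 (Subsingleton.elim _ _)

instance uniqueFinsetCardEqSelf (r : ℕ) : Unique {s : Finset (Fin r) // s.card = r} where
  default := ⟨Finset.univ, Finset.card_fin r⟩
  uniq s := Subtype.ext ((Finset.card_eq_iff_eq_univ _).1 (s.2.trans (Fintype.card_fin r).symm))

variable {M} in
theorem koszulTotalDiff_single_erase (j : Fin r) (m : M) :
    koszulTotalDiff x (Pi.single (Finset.univ.erase j) m) Finset.univ =
      ((-1 : R) ^ (Finset.univ.filter (fun k => k < j)).card * x j) • m := by
  rw [koszulTotalDiff, Finset.sum_eq_single j, Pi.single_eq_same]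
  · intro k _ hkj
    rw [Pi.single_eq_of_ne, smul_zero]
    exact fun h => hkj ((Finset.erase_inj _ (Finset.mem_univ k)).1 h)
  · exact fun h => (h (Finset.mem_univ j)).elim

theorem koszulDiffIn_apply_mem_span_range_smul_top (i : ℕ)
    (φ : {s : Finset (Fin r) // s.card + 1 = i} → M) (t : {s : Finset (Fin r) // s.card = i}) :
    koszulDiffIn x M i φ t ∈ Ideal.span (Set.range x) • (⊤ : Submodule R M) :=
  Submodule.sum_mem _ fun j _ => Submodule.smul_mem_smul
    (Ideal.mul_mem_left _ _ (Ideal.subset_span (Set.mem_range_self j.1))) Submodule.mem_top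

theorem map_range_koszulDiffIn_self :
    (LinearMap.range (koszulDiffIn x M r)).map
        (LinearEquiv.funUnique {s : Finset (Fin r) // s.card = r} R M).toLinearMap =
      Ideal.span (Set.range x) • (⊤ : Submodule R M) := by
  apply le_antisymm
  · rintro _ ⟨_, ⟨φ, rfl⟩, rfl⟩
    exact koszulDiffIn_apply_mem_span_range_smul_top x M r φ default
  · rw [Submodule.span_smul_eq, Submodule.set_smul_le_iff]
    rintro _ m ⟨j, rfl⟩ -
    let ε : R := (-1) ^ (Finset.univ.filter (fun k => k < j)).card
    let Φ : Finset (Fin r) → M := Pi.single (Finset.univ.erase j) (ε • m)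
    have hΦ : koszulDiffIn x M r (Φ ∘ Subtype.val) default = x j • m := by
      rw [koszulDiffIn_comp_val]
      refine (koszulTotalDiff_single_erase x j _).trans ?_
      rw [mul_smul, smul_comm (x j), neg_one_pow_smul_smul_self]
    exact ⟨_, LinearMap.mem_range_self _ (Φ ∘ Subtype.val), hΦ⟩

/-- The isomorphism `H^r(x₁, …, x_r; M) ≅ M / (x₁, …, x_r)M`. -/
def koszulCohomologySelfEquiv :
    koszulCohomology x M r ≃ₗ[R] M ⧸ Ideal.span (Set.range x) • (⊤ : Submodule R M) :=
  Submodule.Quotient.equiv _ _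
    (LinearEquiv.ofTop _ (ker_koszulDiff_self x M) ≪≫ₗ LinearEquiv.funUnique _ R M) <| by
    refine (Submodule.map_comp _ (LinearEquiv.funUnique _ R M).toLinearMap _).trans ?_
    refine (congrArg _ (Submodule.map_comap_subtype _ _)).trans ?_
    rw [ker_koszulDiff_self, top_inf_eq, map_range_koszulDiffIn_self]

end TopCohomology

section Grade

theorem le_TKgrade_iff (T : Set (ModuleCat.{u} R)) {r : ℕ} (x : Fin r → R) (M : Type u)
    [AddCommGroup M] [Module R M] (i : ℕ) :
    (i : ℕ∞) ≤ TKgrade T x M ↔ ∀ j < i, ModuleCat.of R (koszulCohomology x M j) ∈ T := by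
  rw [TKgrade, le_sInf_iff, Set.forall_mem_image]
  simp only [Set.mem_ofPred_eq, Nat.cast_le]
  exact forall_congr' fun j => by rw [not_imp_comm, not_le]

theorem isWeakRegularSeqWrt_succ_iff (T : Set (ModuleCat.{u} R)) {n : ℕ} (x : Fin (n + 1) → R)
    (M : Type u) [AddCommGroup M] [Module R M] :
    IsWeakRegularSeqWrt T x M ↔ IsWeakRegularSeqWrt T (x ∘ Fin.castSucc) M ∧
      ModuleCat.of R (LinearMap.ker (LinearMap.lsmul R
        (M ⧸ Ideal.span (Set.range (x ∘ Fin.castSucc)) • (⊤ : Submodule R M))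
        (x (Fin.last n)))) ∈ T := by
  have hlast : x '' {j | j < Fin.last n} = Set.range (x ∘ Fin.castSucc) := by
    ext a
    simp [Fin.exists_fin_succ', Fin.castSucc_lt_last]
  have hcastSucc (i : Fin n) :
      x '' {j | j < i.castSucc} = (x ∘ Fin.castSucc) '' {j | j < i} := by
    ext a
    simp [Fin.exists_fin_succ', (Fin.castSucc_lt_last i).le]
  rw [IsWeakRegularSeqWrt, Fin.forall_fin_succ', hlast, map_mkQ_comap_lsmul]
  refine and_congr_left' (forall_congr' fun i => ?_)
  rw [hcastSucc]
  rfl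

theorem forall_le_TKgrade_castLE_succ_iff (T : Set (ModuleCat.{u} R)) {n : ℕ} (x : Fin (n + 1) → R)
    (M : Type u) [AddCommGroup M] [Module R M] :
    (∀ (i : ℕ) (h : i ≤ n + 1), (i : ℕ∞) ≤ TKgrade T (fun j : Fin i => x (Fin.castLE h j)) M) ↔
      (∀ (i : ℕ) (h : i ≤ n),
        (i : ℕ∞) ≤ TKgrade T (fun j : Fin i => (x ∘ Fin.castSucc) (Fin.castLE h j)) M) ∧
      ((n + 1 : ℕ) : ℕ∞) ≤ TKgrade T x M := by
  refine ⟨fun h => ⟨fun i hi => h i (hi.trans n.le_succ), h (n + 1) le_rfl⟩, ?_⟩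
  rintro ⟨hlt, hsucc⟩ i hi
  obtain rfl | hi' := hi.eq_or_lt
  · exact hsucc
  · exact hlt i (Nat.le_of_lt_succ hi')

variable (P : ObjectProperty (ModuleCat.{u} R)) [P.IsClosedUnderSubobjects]
  [P.IsClosedUnderQuotients] [P.IsClosedUnderExtensions] (M : Type u) [AddCommGroup M]
  [Module R M]

theorem forall_lt_succ_moduleCat_prop_koszulCohomology_iff {r : ℕ} (x : Fin (r + 1) → R)
    (hP : ∀ j < r, P (ModuleCat.of R (koszulCohomology (x ∘ Fin.castSucc) M j))) :
    (∀ j < r + 1, P (ModuleCat.of R (koszulCohomology x M j))) ↔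
      P (ModuleCat.of R (LinearMap.ker (LinearMap.lsmul R
        (M ⧸ Ideal.span (Set.range (x ∘ Fin.castSucc)) • (⊤ : Submodule R M))
        (x (Fin.last r))))) := by
  have hlt : ∀ j < r, P (ModuleCat.of R (koszulCohomology x M j)) := fun j hj =>
    (moduleCat_prop_koszulCohomology_iff_ker_lsmul x M P fun k hk => hP k (by omega)).2
      (moduleCat_prop_of_injective P _ (Submodule.injective_subtype _) (hP j hj))
  rw [Nat.forall_lt_succ_right, and_iff_right hlt,
    moduleCat_prop_koszulCohomology_iff_ker_lsmul x M P fun k hk => hP k (by omega)]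
  exact moduleCat_prop_congr P (kerLsmulCongr _ (koszulCohomologySelfEquiv _ M))

theorem isWeakRegularSeqWrt_iff_le_tKgrade_general {n : ℕ} (x : Fin n → R) :
    IsWeakRegularSeqWrt {N | P N} x M ↔
      ∀ (i : ℕ) (h : i ≤ n),
        (i : ℕ∞) ≤ TKgrade {N | P N} (fun j : Fin i => x (Fin.castLE h j)) M := by
  induction n with
  | zero =>
    refine iff_of_true (fun i => i.elim0) fun i h => ?_
    obtain rfl := Nat.le_zero.1 h
    exact zero_le
  | succ n ih =>
    rw [isWeakRegularSeqWrt_succ_iff, ih, forall_le_TKgrade_castLE_succ_iff]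
    refine and_congr_right fun h => ?_
    have hvanish := (le_TKgrade_iff _ (x ∘ Fin.castSucc) M n).1 (h n le_rfl)
    rw [le_TKgrade_iff]
    exact (forall_lt_succ_moduleCat_prop_koszulCohomology_iff P M x hvanish).symm

end Grade

/-- **Theorem.** Let `𝔗` be a torsion theory, `x₁, …, x_n` a finite sequence of elements of
`R` and `M` an `R`-module. Then `x₁, …, x_n` is a weak `M`-regular sequence with respect to
`𝔗` if and only if `𝔗-Kgrade_R((x₁, …, x_i)R, M) ≥ i` for all `i = 1, …, n`. -/
theorem isWeakRegularSeqWrt_iff_le_tKgrade (T : Set (ModuleCat.{u} R))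
    (hT : IsTorsionTheory R T) (M : Type u) [AddCommGroup M] [Module R M]
    {n : ℕ} (x : Fin n → R) :
    IsWeakRegularSeqWrt T x M ↔
      ∀ (i : ℕ) (h : i ≤ n),
        (i : ℕ∞) ≤ TKgrade T (fun j : Fin i => x (Fin.castLE h j)) M := by
  have := hT.isClosedUnderSubobjects
  have := hT.isClosedUnderQuotients
  have := hT.isClosedUnderExtensions
  exact isWeakRegularSeqWrt_iff_le_tKgrade_general (· ∈ T) M x
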